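/- Let ν be a σ-invariant Gibbs measure for a d-Hölder continuous φ : Σ_A → ℝ with pressure P = 0 (i.e. ν is the unique equilibrium measure of φ). Then ∫_{Σ_A} φ dν < 0, and, setting h := −∫_{Σ_A} φ dν (which equals the measure-theoretic entropy h_ν(σ) by the variational principle), for every x ∈ Σ_A^* ∪ {∅} one has lim_{r→∞} (1/r) ∫_{[x]} card{ k ∈ ℕ_0 : 0 ≤ −S_kφ(ω) ≤ r } dν(ω) = ν([x]) / h. -/

import Mathlib

open MeasureTheory Filter
open scoped ENNReal NNReal

namespace SFT

variable {l : ℕ}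

/-- The one-sided subshift of finite type determined by the `l × l` matrix `A`:
infinite sequences with transitions allowed by `A`. -/
abbrev SigmaA (l : ℕ) (A : Matrix (Fin l) (Fin l) ℕ) : Type :=
  {ω : ℕ → Fin l // ∀ k, A (ω k) (ω (k + 1)) = 1}

/-- The left shift `σ` on `SigmaA l A`. -/
def shift {A : Matrix (Fin l) (Fin l) ℕ} (ω : SigmaA l A) : SigmaA l A :=
  ⟨fun n => ω.1 (n + 1), fun k => ω.2 (k + 1)⟩

/-- Birkhoff sums `S_k φ = ∑_{m<k} φ ∘ σ^m`. -/
def birkhoff {A : Matrix (Fin l) (Fin l) ℕ} (φ : SigmaA l A → ℝ) (k : ℕ) (ω : SigmaA l A) : ℝ :=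
  ∑ m ∈ Finset.range k, φ (shift^[m] ω)

/-- The matrix `A` has `0`-`1` entries and is irreducible and aperiodic
(some power of `A` has all entries strictly positive). -/
def Primitive (A : Matrix (Fin l) (Fin l) ℕ) : Prop :=
  (∀ i j, A i j = 0 ∨ A i j = 1) ∧ ∃ n : ℕ, 0 < n ∧ ∀ i j, 0 < (A ^ n) i j

/-- A finite word is admissible, i.e. belongs to `Σ_A^*`. -/
def Admissible (A : Matrix (Fin l) (Fin l) ℕ) (x : List (Fin l)) : Prop :=
  x ≠ [] ∧ ∀ (i : ℕ) (h : i + 1 < x.length), A (x[i]'(by omega)) (x[i + 1]'h) = 1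

/-- The cylinder set `[x]` of a finite word (the empty word gives all of `Σ_A`). -/
def cylinder (A : Matrix (Fin l) (Fin l) ℕ) (x : List (Fin l)) : Set (SigmaA l A) :=
  {ω | ∀ (i : ℕ) (h : i < x.length), ω.1 i = x[i]'h}

/-- The initial word `(ω_1, …, ω_k)` of `ω`. -/
def wordPrefix {A : Matrix (Fin l) (Fin l) ℕ} (ω : SigmaA l A) (k : ℕ) : List (Fin l) :=
  List.ofFn (fun i : Fin k => ω.1 i)

/-- `μ` is a Gibbs measure for the potential `φ` with pressure `P`:
`c⁻¹ ≤ μ([ω_1,…,ω_k]) / exp(S_kφ(ω) − kP) ≤ c` for some `c > 1`. -/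
def IsGibbs {A : Matrix (Fin l) (Fin l) ℕ} (φ : SigmaA l A → ℝ) (P : ℝ)
    (μ : Measure (SigmaA l A)) : Prop :=
  ∃ c : ℝ, 1 < c ∧ ∀ (ω : SigmaA l A) (k : ℕ), 0 < k →
    c⁻¹ ≤ (μ (cylinder A (wordPrefix ω k))).toReal / Real.exp (birkhoff φ k ω - k * P) ∧
      (μ (cylinder A (wordPrefix ω k))).toReal / Real.exp (birkhoff φ k ω - k * P) ≤ c

/-- `φ` is Hölder continuous with respect to the metric `d(ω,υ) = 2^{-(ω ∧ υ)}`: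
there are `C` and an exponent `s > 0` with `|φ(ω) − φ(υ)| ≤ C ⬝ d(ω,υ)^s`, i.e.
`|φ(ω) − φ(υ)| ≤ C ⬝ 2^{-sn}` whenever `ω` and `υ` agree in their first `n` coordinates. -/
def HolderCont {A : Matrix (Fin l) (Fin l) ℕ} (φ : SigmaA l A → ℝ) : Prop :=
  ∃ C s : ℝ, 0 < s ∧ ∀ (ω υ : SigmaA l A) (n : ℕ),
    (∀ i < n, ω.1 i = υ.1 i) → |φ ω - φ υ| ≤ C * (2 : ℝ) ^ (-(s * n))

section Combinatorics

variable {A : Matrix (Fin l) (Fin l) ℕ}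

lemma shift_iterate_apply (n : ℕ) (ω : SigmaA l A) (k : ℕ) :
    (shift^[n] ω).1 k = ω.1 (k + n) := by
  induction n generalizing k with
  | zero => rfl
  | succ n ih =>
    rw [Function.iterate_succ_apply']
    change (shift^[n] ω).1 (k + 1) = _
    rw [ih, add_right_comm, add_assoc]

lemma mem_cylinder_wordPrefix {ω υ : SigmaA l A} {n : ℕ} :
    υ ∈ cylinder A (wordPrefix ω n) ↔ ∀ i < n, υ.1 i = ω.1 i := by
  simp [cylinder, wordPrefix]

lemma cylinder_wordPrefix_congr {ω υ : SigmaA l A} {n : ℕ} (h : ∀ i < n, ω.1 i = υ.1 i) :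
    cylinder A (wordPrefix ω n) = cylinder A (wordPrefix υ n) := by
  ext τ
  simp only [mem_cylinder_wordPrefix]
  exact forall₂_congr fun i hi => by rw [h i hi]

/-- A positive entry of a power of a `0`-`1` matrix yields an admissible path. -/
lemma exists_path_of_pow_pos (h01 : ∀ i j, A i j = 0 ∨ A i j = 1) (n : ℕ) (i j : Fin l)
    (h : 0 < (A ^ n) i j) :
    ∃ p : ℕ → Fin l, p 0 = i ∧ p n = j ∧ ∀ k < n, A (p k) (p (k + 1)) = 1 := by
  induction n generalizing i with
  | zero =>
    refine ⟨fun _ => i, rfl, ?_, by simp⟩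
    by_contra hij
    simp [Matrix.one_apply_ne hij] at h
  | succ n ih =>
    rw [pow_succ', Matrix.mul_apply] at h
    obtain ⟨m, -, hm⟩ := Finset.exists_ne_zero_of_sum_ne_zero h.ne'
    obtain ⟨hm₁, hm₂⟩ := mul_ne_zero_iff.1 hm
    obtain ⟨p, hp0, hpn, hp⟩ := ih m (Nat.pos_of_ne_zero hm₂)
    refine ⟨fun k => Nat.casesOn k i p, rfl, hpn, fun k hk => ?_⟩
    cases k with
    | zero => simpa [hp0] using (h01 i m).resolve_left hm₁
    | succ k => exact hp k (by omega)

/-- An admissible path can be prepended to a point of the subshift starting at its endpoint. -/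
lemma exists_prepend (p : ℕ → Fin l) (n : ℕ) (hp : ∀ k < n, A (p k) (p (k + 1)) = 1)
    (ρ : SigmaA l A) (h : ρ.1 0 = p n) :
    ∃ τ : SigmaA l A, (∀ i ≤ n, τ.1 i = p i) ∧ shift^[n] τ = ρ := by
  refine ⟨⟨fun k => if k < n then p k else ρ.1 (k - n), fun k => ?_⟩, fun i hi => ?_, ?_⟩
  · rcases lt_trichotomy (k + 1) n with hk | hk | hk
    · simpa [hk, (by omega : k < n)] using hp k (by omega)
    · simpa [hk, (by omega : k < n), h] using hk ▸ hp k (by omega)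
    · have := ρ.2 (k - n)
      simpa only [if_neg (by omega : ¬ k < n), if_neg (by omega : ¬ k + 1 < n),
        (by omega : k + 1 - n = k - n + 1)] using this
  · rcases hi.lt_or_eq with hi | rfl
    · simp [hi]
    · simp [h]
  · ext k : 2
    rw [shift_iterate_apply]
    simp

/-- Any two points of a primitive subshift can be glued after a fixed transition time. -/
lemma exists_glue (hA : Primitive A) :
    ∃ N : ℕ, 0 < N ∧ (∀ (i : Fin l) (_ : SigmaA l A), ∃ ρ : SigmaA l A, ρ.1 0 = i) ∧
      ∀ (ω υ : SigmaA l A) (n : ℕ), ∃ τ : SigmaA l A,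
        (∀ i ≤ n, τ.1 i = ω.1 i) ∧ shift^[n + N] τ = υ := by
  obtain ⟨h01, N, hN, hpos⟩ := hA
  have key (i : Fin l) (υ : SigmaA l A) : ∃ ρ : SigmaA l A, ρ.1 0 = i ∧ shift^[N] ρ = υ := by
    obtain ⟨p, hp0, hpN, hp⟩ := exists_path_of_pow_pos h01 N i (υ.1 0) (hpos _ _)
    obtain ⟨τ, hτ, hτs⟩ := exists_prepend p N hp υ hpN.symm
    exact ⟨τ, (hτ 0 (Nat.zero_le _)).trans hp0, hτs⟩
  refine ⟨N, hN, fun i υ => (key i υ).imp fun _ h => h.1, fun ω υ n => ?_⟩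
  obtain ⟨ρ, hρ0, hρ⟩ := key (ω.1 n) υ
  obtain ⟨τ, hτ, hτs⟩ := exists_prepend ω.1 n (fun k _ => ω.2 k) ρ hρ0
  refine ⟨τ, hτ, ?_⟩
  rw [add_comm, Function.iterate_add_apply, hτs, hρ]

lemma birkhoff_add (φ : SigmaA l A → ℝ) (m n : ℕ) (ω : SigmaA l A) :
    birkhoff φ (m + n) ω = birkhoff φ m ω + birkhoff φ n (shift^[m] ω) := by
  simp only [birkhoff, Finset.sum_range_add, ← Function.iterate_add_apply]
  simp only [add_comm]

lemma abs_birkhoff_le {φ : SigmaA l A → ℝ} {D : ℝ} (hD : ∀ ω, |φ ω| ≤ D) (n : ℕ)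
    (ω : SigmaA l A) : |birkhoff φ n ω| ≤ n * D := by
  refine (Finset.abs_sum_le_sum_abs _ _).trans ((Finset.sum_le_sum fun _ _ => hD _).trans ?_)
  simp

end Combinatorics

section Topology

variable {A : Matrix (Fin l) (Fin l) ℕ}

lemma continuous_shift : Continuous (shift : SigmaA l A → SigmaA l A) :=
  continuous_induced_rng.2
    (continuous_pi fun n => (continuous_apply (n + 1)).comp continuous_subtype_val)

lemma isClopen_cylinder (x : List (Fin l)) : IsClopen (cylinder A x) := by
  have : cylinder A x = ⋂ i : Fin x.length, (fun ω : SigmaA l A => ω.1 i) ⁻¹' {x[i]} := by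
    ext ω
    simp [cylinder, Fin.forall_iff]
  rw [this]
  exact isClopen_iInter_of_finite fun i =>
    (isClopen_discrete _).preimage ((continuous_apply _).comp continuous_subtype_val)

lemma measurableSet_cylinder (x : List (Fin l)) : MeasurableSet (cylinder A x) :=
  (isClopen_cylinder x).isOpen.measurableSet

lemma HolderCont.continuous {φ : SigmaA l A → ℝ} (hφ : HolderCont φ) : Continuous φ := by
  obtain ⟨C, s, hs, h⟩ := hφ
  rw [Metric.continuous_iff']
  intro ω ε hε
  have hlim : Tendsto (fun n : ℕ => C * (2 : ℝ) ^ (-(s * n))) atTop (nhds 0) := by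
    have h2 : (2 : ℝ) ^ (-s) < 1 := Real.rpow_lt_one_of_one_lt_of_neg one_lt_two (by linarith)
    have := (tendsto_pow_atTop_nhds_zero_of_lt_one (by positivity) h2).const_mul C
    rw [mul_zero] at this
    refine this.congr fun n => ?_
    rw [← Real.rpow_natCast, ← Real.rpow_mul (by norm_num), neg_mul]
  obtain ⟨n, hn⟩ := (hlim.eventually_lt_const hε).exists
  filter_upwards [(isClopen_cylinder (wordPrefix ω n)).isOpen.mem_nhds
    (mem_cylinder_wordPrefix.2 fun _ _ => rfl)] with υ hυ
  exact (h υ ω n (mem_cylinder_wordPrefix.1 hυ)).trans_lt hn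

lemma HolderCont.exists_bound {φ : SigmaA l A → ℝ} (hφ : HolderCont φ) :
    ∃ D, 0 ≤ D ∧ ∀ ω, |φ ω| ≤ D := by
  obtain ⟨C, s, -, h⟩ := hφ
  rcases isEmpty_or_nonempty (SigmaA l A) with _ | ⟨⟨ω₀⟩⟩
  · exact ⟨0, le_rfl, fun ω => isEmptyElim ω⟩
  · have key (ω : SigmaA l A) : |φ ω| ≤ |φ ω₀| + C := by
      have := h ω ω₀ 0 (by simp)
      simp only [CharP.cast_eq_zero, mul_zero, neg_zero, Real.rpow_zero, mul_one] at this
      have := abs_sub_abs_le_abs_sub (φ ω) (φ ω₀)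
      linarith
    exact ⟨_, (abs_nonneg _).trans (key ω₀), key⟩

lemma continuous_birkhoff {φ : SigmaA l A → ℝ} (hφ : Continuous φ) (n : ℕ) :
    Continuous (birkhoff φ n) :=
  continuous_finsetSum _ fun m _ => hφ.comp (continuous_shift.iterate m)

/-- Finite measures on the subshift can be compared on cylinders. -/
lemma measure_le_of_cylinder_le {μ₁ μ₂ : Measure (SigmaA l A)} [IsFiniteMeasure μ₁]
    [IsFiniteMeasure μ₂]
    (h : ∀ (ω : SigmaA l A) (n : ℕ), 0 < n →
      μ₁ (cylinder A (wordPrefix ω n)) ≤ μ₂ (cylinder A (wordPrefix ω n)))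
    {B : Set (SigmaA l A)} (hB : MeasurableSet B) : μ₁ B ≤ μ₂ B := by
  classical
  have closed (K : Set (SigmaA l A)) (hK : IsClosed K) : μ₁ K ≤ μ₂ K := by
    let π (n : ℕ) (ω : SigmaA l A) : Fin (n + 1) → Fin l := fun i => ω.1 i
    have hπ (n : ℕ) (ω : SigmaA l A) : π n ⁻¹' {π n ω} = cylinder A (wordPrefix ω (n + 1)) := by
      ext υ
      simp [mem_cylinder_wordPrefix, π, funext_iff, Fin.forall_iff]
    have hπm (n : ℕ) : Measurable (π n) :=
      measurable_pi_lambda _ fun i => (measurable_pi_apply _).comp measurable_subtype_coe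
    let T (n : ℕ) : Set (SigmaA l A) := π n ⁻¹' (π n '' K)
    have hT (n : ℕ) : MeasurableSet (T n) := hπm n (Set.toFinite _).measurableSet
    have hTle (n : ℕ) : μ₁ (T n) ≤ μ₂ (T n) := by
      have hfin : ((π n '' K).toFinset : Set (Fin (n + 1) → Fin l)) = π n '' K := by simp
      have hsum (μ : Measure (SigmaA l A)) :
          μ (T n) = ∑ y ∈ (π n '' K).toFinset, μ (π n ⁻¹' {y}) := by
        rw [sum_measure_preimage_singleton _ fun y _ => hπm n (measurableSet_singleton y), hfin]
      rw [hsum, hsum]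
      refine Finset.sum_le_sum fun y hy => ?_
      obtain ⟨ω, -, rfl⟩ := Set.mem_toFinset.1 hy
      rw [hπ]
      exact h ω _ n.succ_pos
    have hanti : Antitone T := by
      rintro m n hmn ω ⟨υ, hυ, hυω⟩
      refine ⟨υ, hυ, funext fun i => ?_⟩
      exact congrFun hυω ⟨i, by omega⟩
    have hinter : ⋂ n, T n = K := by
      refine Set.Subset.antisymm (fun ω hω => ?_)
        (Set.subset_iInter fun n => Set.subset_preimage_image _ _)
      choose υ hυ hυω using Set.mem_iInter.1 hω
      refine hK.mem_of_tendsto (f := υ) (b := atTop) ?_ (Eventually.of_forall hυ)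
      rw [tendsto_subtype_rng, tendsto_pi_nhds]
      intro i
      refine tendsto_const_nhds.congr' ?_
      filter_upwards [eventually_ge_atTop i] with n hn
      exact (congrFun (hυω n) ⟨i, by omega⟩).symm
    have lim (μ : Measure (SigmaA l A)) [IsFiniteMeasure μ] :
        Tendsto (fun n => μ (T n)) atTop (nhds (μ K)) := by
      rw [← hinter]
      exact tendsto_measure_iInter_atTop (fun n => (hT n).nullMeasurableSet) hanti
        ⟨0, measure_ne_top _ _⟩
    exact le_of_tendsto_of_tendsto' (lim μ₁) (lim μ₂) hTle
  have : TopologicalSpace.MetrizableSpace (SigmaA l A) :=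
    have := TopologicalSpace.metrizableSpace_of_t3_secondCountable (ℕ → Fin l)
    Topology.IsEmbedding.subtypeVal.metrizableSpace
  rw [hB.measure_eq_iSup_isClosed_of_ne_top (measure_ne_top μ₁ B)]
  exact iSup₂_le fun K hKB => iSup_le fun hK => (closed K hK).trans (measure_mono hKB)

end Topology

section Gibbs

variable {A : Matrix (Fin l) (Fin l) ℕ} {φ : SigmaA l A → ℝ} {ν : Measure (SigmaA l A)}

lemma IsGibbs.exists_bounds (h : IsGibbs φ 0 ν) :
    ∃ c : ℝ, 1 < c ∧ ∀ (ω : SigmaA l A) (k : ℕ), 0 < k →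
      c⁻¹ * Real.exp (birkhoff φ k ω) ≤ ν.real (cylinder A (wordPrefix ω k)) ∧
        ν.real (cylinder A (wordPrefix ω k)) ≤ c * Real.exp (birkhoff φ k ω) := by
  obtain ⟨c, hc, h⟩ := h
  refine ⟨c, hc, fun ω k hk => ?_⟩
  have := h ω k hk
  rw [mul_zero, sub_zero, le_div_iff₀ (Real.exp_pos _), div_le_iff₀ (Real.exp_pos _)] at this
  exact this

/-- Quasi-independence of cylinders under a Gibbs measure, from below. -/
lemma IsGibbs.exists_mixing [IsFiniteMeasure ν] (h : IsGibbs φ 0 ν) (hφ : HolderCont φ)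
    (hA : Primitive A) :
    ∃ κ : ℝ, 0 < κ ∧ ∀ (ω : SigmaA l A) (n : ℕ), 0 < n → ∃ m, ∀ (υ : SigmaA l A) (k : ℕ), 0 < k →
      κ * ν.real (cylinder A (wordPrefix ω n)) * ν.real (cylinder A (wordPrefix υ k)) ≤
        ν.real (cylinder A (wordPrefix ω n) ∩ shift^[m] ⁻¹' cylinder A (wordPrefix υ k)) := by
  obtain ⟨c, hc, hcb⟩ := h.exists_bounds
  obtain ⟨D, hD0, hD⟩ := hφ.exists_bound
  obtain ⟨N, hN, -, hglue⟩ := exists_glue hA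
  obtain ⟨N, rfl⟩ := Nat.exists_eq_add_of_le' hN
  have hc0 : 0 < c := by linarith
  refine ⟨c⁻¹ * Real.exp (-(N * D)) * (c⁻¹ * c⁻¹), by positivity, fun ω n hn => ?_⟩
  obtain ⟨n, rfl⟩ := Nat.exists_eq_add_of_le' hn
  refine ⟨n + (N + 1), fun υ k hk => ?_⟩
  obtain ⟨τ, hτω, hτυ⟩ := hglue ω υ n
  have hcyl : cylinder A (wordPrefix ω (n + 1)) = cylinder A (wordPrefix τ (n + 1)) :=
    cylinder_wordPrefix_congr fun i hi => (hτω i (by omega)).symm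
  have hsub : cylinder A (wordPrefix τ (n + 1 + N + k)) ⊆ cylinder A (wordPrefix ω (n + 1)) ∩
      shift^[n + (N + 1)] ⁻¹' cylinder A (wordPrefix υ k) := by
    intro ρ hρ
    rw [mem_cylinder_wordPrefix] at hρ
    rw [hcyl]
    refine ⟨mem_cylinder_wordPrefix.2 fun i hi => hρ i (by omega),
      mem_cylinder_wordPrefix.2 fun i hi => ?_⟩
    rw [← hτυ, shift_iterate_apply, shift_iterate_apply]
    exact hρ _ (by omega)
  have hS : birkhoff φ (n + 1) τ + -(N * D) + birkhoff φ k υ ≤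
      birkhoff φ (n + 1 + N + k) τ := by
    rw [birkhoff_add φ (n + 1 + N), birkhoff_add φ (n + 1),
      show shift^[n + 1 + N] τ = υ by rw [← hτυ, add_assoc, add_comm 1 N]]
    have := (abs_le.1 (abs_birkhoff_le hD N (shift^[n + 1] τ))).1
    linarith
  have h₁ : c⁻¹ * ν.real (cylinder A (wordPrefix ω (n + 1))) ≤
      Real.exp (birkhoff φ (n + 1) τ) := by
    rw [inv_mul_le_iff₀ hc0, hcyl]
    exact (hcb τ _ n.succ_pos).2
  have h₂ : c⁻¹ * ν.real (cylinder A (wordPrefix υ k)) ≤ Real.exp (birkhoff φ k υ) := by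
    rw [inv_mul_le_iff₀ hc0]
    exact (hcb υ _ hk).2
  calc _ = c⁻¹ * ((c⁻¹ * ν.real (cylinder A (wordPrefix ω (n + 1)))) * Real.exp (-(N * D)) *
        (c⁻¹ * ν.real (cylinder A (wordPrefix υ k)))) := by ring
    _ ≤ c⁻¹ * (Real.exp (birkhoff φ (n + 1) τ) * Real.exp (-(N * D)) *
        Real.exp (birkhoff φ k υ)) := by gcongr
    _ = c⁻¹ * Real.exp (birkhoff φ (n + 1) τ + -(N * D) + birkhoff φ k υ) := by
      rw [Real.exp_add, Real.exp_add]
    _ ≤ c⁻¹ * Real.exp (birkhoff φ (n + 1 + N + k) τ) := by gcongr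
    _ ≤ ν.real (cylinder A (wordPrefix τ (n + 1 + N + k))) := (hcb τ _ (by omega)).1
    _ ≤ _ := measureReal_mono hsub

lemma IsGibbs.exists_contraction [IsFiniteMeasure ν] (h : IsGibbs φ 0 ν) (hφ : HolderCont φ)
    (hA : Primitive A) (hl : 2 ≤ l) :
    ∃ N : ℕ, ∃ q : ℝ, 0 ≤ q ∧ q < 1 ∧ ∀ (ω : SigmaA l A) (n : ℕ), 0 < n →
      ν.real (cylinder A (wordPrefix ω (n + N))) ≤ q * ν.real (cylinder A (wordPrefix ω n)) := by
  obtain ⟨c, hc, hcb⟩ := h.exists_bounds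
  obtain ⟨D, hD0, hD⟩ := hφ.exists_bound
  obtain ⟨N, hN, hstart, hglue⟩ := exists_glue hA
  have hc0 : 0 < c := by linarith
  have hκ : c⁻¹ * Real.exp (-(N * D)) * c⁻¹ ≤ 1 := by
    have h1 : c⁻¹ ≤ 1 := inv_le_one_of_one_le₀ hc.le
    have h2 : Real.exp (-(N * D)) ≤ 1 := Real.exp_le_one_iff.2 (by simpa using by positivity)
    exact mul_le_one₀ (mul_le_one₀ h1 (Real.exp_pos _).le h2) (by positivity) h1
  refine ⟨N, 1 - c⁻¹ * Real.exp (-(N * D)) * c⁻¹, by linarith, by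
    simpa using by positivity, fun ω n hn => ?_⟩
  obtain ⟨n, rfl⟩ := Nat.exists_eq_add_of_le' hn
  have : Nontrivial (Fin l) := Fin.nontrivial_iff_two_le.2 hl
  obtain ⟨j, hj⟩ := exists_ne (ω.1 (n + N))
  obtain ⟨υ, hυ⟩ := hstart j ω
  obtain ⟨τ, hτω, hτυ⟩ := hglue ω υ n
  have hτj : τ.1 (n + N) ≠ ω.1 (n + N) := by
    rwa [show τ.1 (n + N) = j by rw [← hυ, ← hτυ, shift_iterate_apply, zero_add]]
  have hcyl : cylinder A (wordPrefix ω (n + 1)) = cylinder A (wordPrefix τ (n + 1)) :=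
    cylinder_wordPrefix_congr fun i hi => (hτω i (by omega)).symm
  have hmono (ρ : SigmaA l A) : cylinder A (wordPrefix ρ (n + 1 + N)) ⊆
      cylinder A (wordPrefix ρ (n + 1)) := fun ξ hξ =>
    mem_cylinder_wordPrefix.2 fun i hi => mem_cylinder_wordPrefix.1 hξ i (by omega)
  have hdisj : Disjoint (cylinder A (wordPrefix ω (n + 1 + N)))
      (cylinder A (wordPrefix τ (n + 1 + N))) := by
    refine Set.disjoint_left.2 fun ξ h₁ h₂ => hτj ?_
    rw [← mem_cylinder_wordPrefix.1 h₁ _ (by omega), ← mem_cylinder_wordPrefix.1 h₂ _ (by omega)]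
  have hsum : ν.real (cylinder A (wordPrefix ω (n + 1 + N))) +
      ν.real (cylinder A (wordPrefix τ (n + 1 + N))) ≤
        ν.real (cylinder A (wordPrefix ω (n + 1))) := by
    rw [← measureReal_union hdisj (measurableSet_cylinder _)]
    exact measureReal_mono (Set.union_subset (hmono ω) (hcyl ▸ hmono τ))
  have hS : birkhoff φ (n + 1) τ + -(N * D) ≤ birkhoff φ (n + 1 + N) τ := by
    rw [birkhoff_add φ (n + 1)]
    have := (abs_le.1 (abs_birkhoff_le hD N (shift^[n + 1] τ))).1
    linarith
  have h₁ : c⁻¹ * ν.real (cylinder A (wordPrefix ω (n + 1))) ≤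
      Real.exp (birkhoff φ (n + 1) τ) := by
    rw [inv_mul_le_iff₀ hc0, hcyl]
    exact (hcb τ _ n.succ_pos).2
  have : c⁻¹ * Real.exp (-(N * D)) * c⁻¹ * ν.real (cylinder A (wordPrefix ω (n + 1))) ≤
      ν.real (cylinder A (wordPrefix τ (n + 1 + N))) := by
    calc _ = c⁻¹ * ((c⁻¹ * ν.real (cylinder A (wordPrefix ω (n + 1)))) *
          Real.exp (-(N * D))) := by ring
      _ ≤ c⁻¹ * (Real.exp (birkhoff φ (n + 1) τ) * Real.exp (-(N * D))) := by gcongr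
      _ = c⁻¹ * Real.exp (birkhoff φ (n + 1) τ + -(N * D)) := by rw [Real.exp_add]
      _ ≤ c⁻¹ * Real.exp (birkhoff φ (n + 1 + N) τ) := by gcongr
      _ ≤ _ := (hcb τ _ (by omega)).1
  linarith

/-- A potential of zero pressure has a uniformly negative Birkhoff sum. -/
lemma IsGibbs.exists_birkhoff_le_neg_one [IsProbabilityMeasure ν] (h : IsGibbs φ 0 ν)
    (hφ : HolderCont φ) (hA : Primitive A) (hl : 2 ≤ l) :
    ∃ L : ℕ, 0 < L ∧ ∀ ω, birkhoff φ L ω ≤ -1 := by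
  obtain ⟨c, hc, hcb⟩ := h.exists_bounds
  obtain ⟨N, q, hq0, hq1, hq⟩ := h.exists_contraction hφ hA hl
  have hc0 : 0 < c := by linarith
  have hpow (ω : SigmaA l A) (j : ℕ) : ν.real (cylinder A (wordPrefix ω (1 + j * N))) ≤ q ^ j := by
    induction j with
    | zero => simp
    | succ j ih =>
      rw [add_mul, one_mul, ← add_assoc, pow_succ']
      exact (hq ω _ (by omega)).trans (by gcongr)
  obtain ⟨j, hj⟩ := (((tendsto_pow_atTop_nhds_zero_of_lt_one hq0 hq1).const_mul c).eventually_lt_const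
    (by simpa using Real.exp_pos (-1))).exists
  refine ⟨1 + j * N, by omega, fun ω => ?_⟩
  rw [← Real.exp_le_exp]
  have := (hcb ω (1 + j * N) (by omega)).1
  rw [inv_mul_le_iff₀ hc0] at this
  exact this.trans ((mul_le_mul_of_nonneg_left (hpow ω j) hc0.le).trans hj.le)

/-- Birkhoff sums of a potential of zero pressure decrease at least linearly. -/
lemma IsGibbs.exists_linear_growth [IsProbabilityMeasure ν] (h : IsGibbs φ 0 ν)
    (hφ : HolderCont φ) (hA : Primitive A) (hl : 2 ≤ l) :
    ∃ δ C : ℝ, 0 < δ ∧ 0 ≤ C ∧ ∀ (k : ℕ) (ω : SigmaA l A), δ * k - C ≤ -birkhoff φ k ω := by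
  obtain ⟨D, hD0, hD⟩ := hφ.exists_bound
  obtain ⟨L, hL, hneg⟩ := h.exists_birkhoff_le_neg_one hφ hA hl
  have hmul (q : ℕ) (ω : SigmaA l A) : birkhoff φ (q * L) ω ≤ -q := by
    induction q with
    | zero => simp [birkhoff]
    | succ q ih =>
      rw [add_mul, one_mul, birkhoff_add]
      push_cast
      linarith [hneg (shift^[q * L] ω)]
  have hL' : (0 : ℝ) < L := by exact_mod_cast hL
  refine ⟨(L : ℝ)⁻¹, 1 + L * D, by positivity, by positivity, fun k ω => ?_⟩
  have hk : k / L * L + k % L = k := Nat.div_add_mod' k L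
  rw [← hk, birkhoff_add, hk]
  have h₁ := hmul (k / L) ω
  have h₂ := (abs_le.1 (abs_birkhoff_le hD (k % L) (shift^[k / L * L] ω))).2
  have h₃ : ((k % L : ℕ) : ℝ) * D ≤ L * D := by
    gcongr
    exact (Nat.mod_lt k hL).le
  have h₄ : (L : ℝ)⁻¹ * k ≤ (k / L : ℕ) + 1 := by
    rw [inv_mul_le_iff₀ hL']
    exact_mod_cast (Nat.lt_mul_div_succ k hL).le
  linarith

lemma IsGibbs.ergodic [IsProbabilityMeasure ν] (h : IsGibbs φ 0 ν)
    (hφ : HolderCont φ) (hA : Primitive A) (hν : MeasurePreserving shift ν ν) :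
    Ergodic shift ν := by
  refine ⟨hν, ⟨fun B hB hBinv => ?_⟩⟩
  obtain ⟨κ, hκ, hmix⟩ := h.exists_mixing hφ hA
  have hiter (m : ℕ) : shift^[m] ⁻¹' B = B := by
    rw [Set.preimage_iterate_eq]
    exact Function.iterate_fixed hBinv m
  have ofReal_mul_le {a b : Set (SigmaA l A)} {t : ℝ} (ht : 0 ≤ t)
      (hab : t * ν.real a ≤ ν.real b) : ENNReal.ofReal t * ν a ≤ ν b := by
    rw [← ofReal_measureReal (s := a), ← ofReal_measureReal (s := b), ← ENNReal.ofReal_mul ht]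
    exact ENNReal.ofReal_le_ofReal hab
  have (t : ℝ) : IsFiniteMeasure (ENNReal.ofReal t • ν) :=
    Measure.smul_finite _ ENNReal.ofReal_ne_top
  have hcyl (ω : SigmaA l A) (n : ℕ) (hn : 0 < n) :
      κ * ν.real B * ν.real (cylinder A (wordPrefix ω n)) ≤
        ν.real (cylinder A (wordPrefix ω n) ∩ B) := by
    obtain ⟨m, hm⟩ := hmix ω n hn
    have hsm : Measurable (shift^[m] : SigmaA l A → SigmaA l A) :=
      (continuous_shift.iterate m).measurable
    have key := measure_le_of_cylinder_le
      (μ₁ := ENNReal.ofReal (κ * ν.real (cylinder A (wordPrefix ω n))) • ν)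
      (μ₂ := (ν.restrict (cylinder A (wordPrefix ω n))).map shift^[m]) (fun υ k hk => by
        rw [Measure.map_apply hsm (measurableSet_cylinder _),
          Measure.restrict_apply (hsm (measurableSet_cylinder _)), Set.inter_comm]
        exact ofReal_mul_le (by positivity) (hm υ k hk)) hB
    rw [Measure.map_apply hsm hB, Measure.restrict_apply (hsm hB), hiter, Set.inter_comm,
      Measure.smul_apply, smul_eq_mul] at key
    have := ENNReal.toReal_mono (measure_ne_top _ _) key
    rw [ENNReal.toReal_mul, ENNReal.toReal_ofReal (by positivity)] at this
    calc _ = κ * ν.real (cylinder A (wordPrefix ω n)) * ν.real B := by ring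
      _ ≤ _ := this
  have key := measure_le_of_cylinder_le (μ₁ := ENNReal.ofReal (κ * ν.real B) • ν)
    (μ₂ := ν.restrict B) (fun ω n hn => by
      rw [Measure.restrict_apply (measurableSet_cylinder _)]
      exact ofReal_mul_le (by positivity) (hcyl ω n hn)) hB.compl
  rw [Measure.restrict_apply hB.compl, Set.compl_inter_self, measure_empty, Measure.smul_apply,
    smul_eq_mul, nonpos_iff_eq_zero, mul_eq_zero, ENNReal.ofReal_eq_zero] at key
  rw [eventuallyConst_set']
  rcases key with h0 | h0
  · refine Or.inl (ae_eq_empty.2 ?_)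
    have : ν.real B = 0 := le_antisymm (nonpos_of_mul_nonpos_right h0 hκ) measureReal_nonneg
    exact (measureReal_eq_zero_iff).1 this
  · exact Or.inr (ae_eq_univ.2 h0)

end Gibbs

section MeanErgodic

variable {α : Type*} [MeasurableSpace α] {μ : Measure α} [IsProbabilityMeasure μ]

/-- Mean ergodic theorem: Birkhoff averages along an ergodic map converge in measure to the space
average. -/
lemma tendstoInMeasure_birkhoffAverage {f : α → α} (hf : Ergodic f μ) {g : α → ℝ}
    (hg : MemLp g 2 μ) :
    TendstoInMeasure μ (birkhoffAverage ℝ f g) atTop (fun _ => ∫ x, g x ∂μ) := by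
  have hmp := hf.toMeasurePreserving
  let U : Lp ℝ 2 μ →L[ℝ] Lp ℝ 2 μ :=
    (Lp.compMeasurePreservingₗᵢ ℝ f hmp).toContinuousLinearMap
  have hU (u : Lp ℝ 2 μ) : U u = Lp.compMeasurePreserving f hmp u := rfl
  have hlim := U.tendsto_birkhoffAverage_orthogonalProjection
    (LinearIsometry.norm_toContinuousLinearMap_le _) (hg.toLp g)
  set Q := (U.eqLocus (1 : Lp ℝ 2 μ →L[ℝ] Lp ℝ 2 μ)).orthogonalProjectionOnto (hg.toLp g) with hQ
  have hQU : Lp.compMeasurePreserving f hmp (Q : Lp ℝ 2 μ) = Q := Q.2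
  obtain ⟨c, hc⟩ := hf.ae_eq_const_of_ae_eq_comp_ae (Lp.aestronglyMeasurable (Q : Lp ℝ 2 μ)) (by
    have := Lp.coeFn_compMeasurePreserving (Q : Lp ℝ 2 μ) hmp
    rw [hQU] at this
    exact this.symm)
  have hc_eq : c = ∫ x, g x ∂μ := by
    let e : Lp ℝ 2 μ := (memLp_const (1 : ℝ)).toLp _
    have he : (e : α → ℝ) =ᵐ[μ] fun _ => 1 := MemLp.coeFn_toLp _
    have heU : e ∈ U.eqLocus (1 : Lp ℝ 2 μ →L[ℝ] Lp ℝ 2 μ) := by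
      change Lp.compMeasurePreserving f hmp e = e
      exact Lp.toLp_compMeasurePreserving _ hmp
    have hinner : inner ℝ (Q : Lp ℝ 2 μ) e = inner ℝ (hg.toLp g) e :=
      Submodule.inner_orthogonalProjectionOnto_eq_of_mem_right ⟨e, heU⟩ (hg.toLp g)
    have hl : inner ℝ (Q : Lp ℝ 2 μ) e = c := by
      rw [L2.inner_def, integral_congr_ae (g := fun _ => c)]
      · simp
      · filter_upwards [hc, he] with x h₁ h₂
        simp [h₁, h₂]
    have hr : inner ℝ (hg.toLp g) e = ∫ x, g x ∂μ := by
      rw [L2.inner_def]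
      refine integral_congr_ae ?_
      filter_upwards [hg.coeFn_toLp, he] with x h₁ h₂
      simp [h₁, h₂]
    rw [← hl, hinner, hr]
  have hiter (m : ℕ) : (U^[m] (hg.toLp g) : α → ℝ) =ᵐ[μ] g ∘ f^[m] := by
    have : U^[m] = Lp.compMeasurePreserving (E := ℝ) (p := 2) f^[m] (hmp.iterate m) :=
      Lp.compMeasurePreserving_iterate hmp m
    rw [this]
    exact (Lp.coeFn_compMeasurePreserving _ _).trans
      ((hmp.iterate m).quasiMeasurePreserving.ae_eq_comp hg.coeFn_toLp)
  refine (tendstoInMeasure_of_tendsto_Lp hlim).congr (fun n => ?_) (hc_eq ▸ hc)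
  have hsmul := Lp.coeFn_smul ((n : ℝ)⁻¹) (∑ m ∈ Finset.range n, U^[m] (hg.toLp g))
  have hsum := Lp.coeFn_finsetSum (Finset.range n) fun m => U^[m] (hg.toLp g)
  filter_upwards [hsmul, hsum, ae_all_iff.2 hiter] with x h₁ h₂ h₃
  simp only [birkhoffAverage, birkhoffSum, id_eq]
  rw [h₁, Pi.smul_apply, h₂, Finset.sum_apply]
  simp [h₃]

end MeanErgodic

section Counting

/-- Counting asymptotics for a triangular array of weights `a r k` concentrated, up to an error
tending to zero in mean, on `k ≤ r / h`. -/
lemma tendsto_sum_div_of_threshold {h p b d : ℝ} (hh : 0 < h) (hp : 0 ≤ p) (hb : h⁻¹ ≤ b)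
    (hd : 0 ≤ d) {a : ℝ → ℕ → ℝ} {q : ℝ → ℕ → ℝ} {K : ℕ}
    (hq : ∀ ε, 0 < ε → Tendsto (q ε) atTop (nhds 0))
    (hlow : ∀ ε, 0 < ε → ∀ r : ℝ, 0 < r → ∀ k : ℕ, K ≤ k → k * (h + ε) ≤ r → p - q ε k ≤ a r k)
    (hnonneg : ∀ r k, 0 ≤ a r k) (hle : ∀ r k, a r k ≤ p)
    (hup : ∀ ε, 0 < ε → ε < h → ∀ r : ℝ, 0 < r → ∀ k : ℕ, r < k * (h - ε) → a r k ≤ q ε k)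
    (hq0 : ∀ ε k, 0 ≤ q ε k) :
    Tendsto (fun r : ℝ => (∑ k ∈ Finset.range (⌊b * r + d⌋₊ + 1), a r k) / r) atTop
      (nhds (p / h)) := by
  set M : ℝ → ℕ := fun r => ⌊b * r + d⌋₊ + 1 with hM
  have hb0 : 0 < b := (inv_pos.2 hh).trans_le hb
  have hMtop : Tendsto M atTop atTop :=
    tendsto_atTop_mono (fun _ => Nat.le_succ _) (tendsto_nat_floor_atTop.comp
      (tendsto_atTop_add_const_right _ _ (tendsto_id.const_mul_atTop hb0)))
  have hinv (t : ℝ) : Tendsto (fun r : ℝ => t / r) atTop (nhds 0) :=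
    tendsto_const_nhds.div_atTop tendsto_id
  have herr (ε : ℝ) (hε : 0 < ε) :
      Tendsto (fun r : ℝ => (∑ k ∈ Finset.range (M r), q ε k) / r) atTop (nhds 0) := by
    have h₁ := ((hq ε hε).cesaro.comp hMtop).mul_const (b + (d + 1))
    rw [zero_mul] at h₁
    refine squeeze_zero' ?_ ?_ h₁
    · filter_upwards [eventually_gt_atTop 0] with r hr
      exact div_nonneg (Finset.sum_nonneg fun _ _ => hq0 _ _) hr.le
    · filter_upwards [eventually_ge_atTop 1] with r hr
      have hr0 : 0 < r := by linarith
      have hMpos : (0 : ℝ) < M r := by simp only [hM]; positivity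
      have hMle : (M r : ℝ) ≤ (b + (d + 1)) * r := by
        have := Nat.floor_le (a := b * r + d) (by positivity)
        simp only [hM]
        push_cast
        nlinarith
      have hs : 0 ≤ ∑ k ∈ Finset.range (M r), q ε k := Finset.sum_nonneg fun _ _ => hq0 _ _
      simp only [Function.comp_apply]
      rw [div_le_iff₀ hr0, mul_assoc, mul_comm (M r : ℝ)⁻¹, mul_assoc]
      refine le_mul_of_one_le_right hs ?_
      rwa [inv_mul_eq_div, one_le_div hMpos]
  refine tendsto_order.2 ⟨fun x hx => ?_, fun x hx => ?_⟩
  · obtain ⟨ε, hxε, hε⟩ : ∃ ε, x < p / (h + ε) ∧ 0 < ε := by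
      have : Tendsto (fun ε : ℝ => p / (h + ε)) (nhdsWithin 0 (Set.Ioi 0)) (nhds (p / h)) := by
        refine Tendsto.mono_left ?_ nhdsWithin_le_nhds
        have : ContinuousAt (fun ε : ℝ => p / (h + ε)) 0 :=
          continuousAt_const.div (by fun_prop) (by simpa using hh.ne')
        simpa [ContinuousAt] using this
      exact ((this.eventually_const_lt hx).and self_mem_nhdsWithin).exists
    have hL := ((tendsto_const_nhds (x := p / (h + ε))).sub (hinv (p * K))).sub (herr ε hε)
    simp only [sub_zero] at hL
    filter_upwards [hL.eventually_const_lt hxε, eventually_gt_atTop 0] with r hr hr0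
    refine hr.trans_le ?_
    have hhε : 0 < h + ε := by linarith
    have key : p * (r / (h + ε)) - p * K - ∑ k ∈ Finset.range (M r), q ε k ≤
        ∑ k ∈ Finset.range (M r), a r k := by
      set R := ⌊r / (h + ε)⌋₊ + 1 with hR
      have hRM : R ≤ M r := by
        simp only [hR, hM]
        gcongr
        have : r / (h + ε) ≤ r / h := by gcongr; linarith
        have : r / h ≤ b * r := by rw [div_eq_inv_mul]; gcongr
        linarith
      have hRr : r / (h + ε) ≤ R := by
        simp only [hR]; push_cast; exact (Nat.lt_floor_add_one _).le
      have hterm : ∀ k ∈ Finset.Ico K R, p - q ε k ≤ a r k := fun k hk => by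
        refine hlow ε hε r hr0 k (Finset.mem_Ico.1 hk).1 ?_
        rw [← le_div_iff₀ hhε]
        refine (Nat.le_floor_iff (by positivity)).1 ?_
        have := (Finset.mem_Ico.1 hk).2
        omega
      have hsub : Finset.Ico K R ⊆ Finset.range (M r) := fun k hk => by
        have := Finset.mem_Ico.1 hk
        exact Finset.mem_range.2 (by omega)
      have hcard : (R : ℝ) - K ≤ (R - K : ℕ) := by
        rw [sub_le_iff_le_add]
        exact_mod_cast le_tsub_add
      calc _ ≤ p * ((R - K : ℕ) : ℝ) - ∑ k ∈ Finset.range (M r), q ε k := by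
            have : p * (r / (h + ε) - K) ≤ p * ((R - K : ℕ) : ℝ) := by
              gcongr; linarith
            linarith
        _ ≤ p * ((R - K : ℕ) : ℝ) - ∑ k ∈ Finset.Ico K R, q ε k := by
            gcongr
            exact fun _ _ _ => hq0 _ _
        _ = ∑ k ∈ Finset.Ico K R, (p - q ε k) := by
            rw [Finset.sum_sub_distrib]; simp [mul_comm]
        _ ≤ ∑ k ∈ Finset.Ico K R, a r k := Finset.sum_le_sum hterm
        _ ≤ _ := Finset.sum_le_sum_of_subset_of_nonneg hsub fun _ _ _ => hnonneg _ _
    calc _ = (p * (r / (h + ε)) - p * K - ∑ k ∈ Finset.range (M r), q ε k) / r := by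
          field_simp
      _ ≤ _ := by gcongr
  · obtain ⟨ε, hxε, hε, hεh⟩ : ∃ ε, p / (h - ε) < x ∧ 0 < ε ∧ ε < h := by
      have : Tendsto (fun ε : ℝ => p / (h - ε)) (nhdsWithin 0 (Set.Ioi 0)) (nhds (p / h)) := by
        refine Tendsto.mono_left ?_ nhdsWithin_le_nhds
        have : ContinuousAt (fun ε : ℝ => p / (h - ε)) 0 :=
          continuousAt_const.div (by fun_prop) (by simpa using hh.ne')
        simpa [ContinuousAt] using this
      exact ((this.eventually_lt_const hx).and (Ioo_mem_nhdsGT hh)).exists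
    have hL := ((tendsto_const_nhds (x := p / (h - ε))).add (hinv p)).add (herr ε hε)
    simp only [add_zero] at hL
    filter_upwards [hL.eventually_lt_const hxε, eventually_gt_atTop 0] with r hr hr0
    refine lt_of_le_of_lt ?_ hr
    have hhε : 0 < h - ε := by linarith
    have key : ∑ k ∈ Finset.range (M r), a r k ≤
        p * (r / (h - ε)) + p + ∑ k ∈ Finset.range (M r), q ε k := by
      set R := ⌊r / (h - ε)⌋₊ + 1 with hR
      have hRr : (R : ℝ) ≤ r / (h - ε) + 1 := by
        simp only [hR]; push_cast; gcongr; exact Nat.floor_le (by positivity)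
      have hterm (k : ℕ) : a r k ≤ (if k < R then p else 0) + q ε k := by
        split_ifs with hk
        · linarith [hle r k, hq0 ε k]
        · rw [zero_add]
          refine hup ε hε hεh r hr0 k ?_
          rw [← div_lt_iff₀ hhε]
          exact (Nat.floor_lt (by positivity)).1 (by omega)
      have hcount : ∑ k ∈ Finset.range (M r), (if k < R then p else 0) ≤ R * p := by
        rw [← Finset.sum_filter, Finset.sum_const, nsmul_eq_mul]
        gcongr
        refine (Finset.card_le_card (t := Finset.range R) fun k hk => ?_).trans_eq (by simp)
        exact Finset.mem_range.2 (Finset.mem_filter.1 hk).2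
      calc _ ≤ ∑ k ∈ Finset.range (M r), ((if k < R then p else 0) + q ε k) :=
            Finset.sum_le_sum fun k _ => hterm k
        _ = ∑ k ∈ Finset.range (M r), (if k < R then p else 0) +
            ∑ k ∈ Finset.range (M r), q ε k := Finset.sum_add_distrib
        _ ≤ _ := by nlinarith
    calc _ ≤ (p * (r / (h - ε)) + p + ∑ k ∈ Finset.range (M r), q ε k) / r := by gcongr
      _ = _ := by field_simp

end Counting

section Assembly

variable {A : Matrix (Fin l) (Fin l) ℕ} {φ : SigmaA l A → ℝ} {ν : Measure (SigmaA l A)}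

lemma integral_neg_of_isGibbs [IsProbabilityMeasure ν] (hl : 2 ≤ l) (hA : Primitive A)
    (hφ : HolderCont φ) (hGibbs : IsGibbs φ 0 ν) (hmp : MeasurePreserving shift ν ν) :
    (∫ ω, φ ω ∂ν) < 0 := by
  have hφc := hφ.continuous
  obtain ⟨D, -, hD⟩ := hφ.exists_bound
  obtain ⟨L, hL, hneg⟩ := hGibbs.exists_birkhoff_le_neg_one hφ hA hl
  have hint : Integrable φ ν :=
    Integrable.of_bound hφc.aestronglyMeasurable D (Eventually.of_forall hD)
  have hintm (m : ℕ) : Integrable (fun ω => φ (shift^[m] ω)) ν :=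
    (hmp.iterate m).integrable_comp_of_integrable hint
  have hsum : ∫ ω, birkhoff φ L ω ∂ν = L * ∫ ω, φ ω ∂ν := by
    simp only [birkhoff]
    rw [integral_finsetSum _ fun m _ => hintm m]
    have (m : ℕ) : ∫ ω, φ (shift^[m] ω) ∂ν = ∫ ω, φ ω ∂ν := by
      rw [← integral_map (hmp.iterate m).aemeasurable hφc.aestronglyMeasurable,
        (hmp.iterate m).map_eq]
    simp [this]
  have hle : ∫ ω, birkhoff φ L ω ∂ν ≤ ∫ _, (-1 : ℝ) ∂ν :=
    integral_mono (integrable_finsetSum _ fun m _ => hintm m) (integrable_const _) hneg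
  rw [hsum] at hle
  simp only [integral_const, probReal_univ, one_smul] at hle
  by_contra! hcon
  have : (0 : ℝ) ≤ L * ∫ ω, φ ω ∂ν := by positivity
  linarith

/-- The integrated counting function is a finite sum of probabilities. -/
lemma setIntegral_ncard_eq_sum [IsFiniteMeasure ν] (hφ : Continuous φ) {B : Set (SigmaA l A)}
    {r : ℝ} {M : ℕ} (hM : ∀ k ω, -birkhoff φ k ω ≤ r → k < M) :
    ∫ ω in B, ((Set.ncard {k : ℕ | 0 ≤ -birkhoff φ k ω ∧ -birkhoff φ k ω ≤ r} : ℕ) : ℝ) ∂ν =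
      ∑ k ∈ Finset.range M,
        ν.real (B ∩ {ω | 0 ≤ -birkhoff φ k ω ∧ -birkhoff φ k ω ≤ r}) := by
  classical
  have hE (k : ℕ) : MeasurableSet {ω : SigmaA l A | 0 ≤ -birkhoff φ k ω ∧ -birkhoff φ k ω ≤ r} := by
    have hc := (continuous_birkhoff hφ k).neg
    exact ((isClosed_le continuous_const hc).inter (isClosed_le hc continuous_const)).measurableSet
  have hcount (ω : SigmaA l A) :
      ((Set.ncard {k : ℕ | 0 ≤ -birkhoff φ k ω ∧ -birkhoff φ k ω ≤ r} : ℕ) : ℝ) =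
        ∑ k ∈ Finset.range M,
          {ω | 0 ≤ -birkhoff φ k ω ∧ -birkhoff φ k ω ≤ r}.indicator (fun _ => (1 : ℝ)) ω := by
    have : {k : ℕ | 0 ≤ -birkhoff φ k ω ∧ -birkhoff φ k ω ≤ r} =
        ((Finset.range M).filter fun k => 0 ≤ -birkhoff φ k ω ∧ -birkhoff φ k ω ≤ r : Finset ℕ) := by
      ext k
      simp only [Set.mem_ofPred_eq, Finset.coe_filter, Finset.mem_range]
      exact ⟨fun hk => ⟨hM k ω hk.2, hk⟩, fun hk => hk.2⟩
    rw [this, Set.ncard_coe_finset, Finset.card_filter]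
    push_cast
    refine Finset.sum_congr rfl fun k _ => ?_
    simp [Set.indicator_apply]
  simp only [hcount]
  rw [integral_finsetSum _ fun k _ => (integrable_const (1 : ℝ)).indicator (hE k)]
  refine Finset.sum_congr rfl fun k _ => ?_
  rw [integral_indicator_const _ (hE k), smul_eq_mul, mul_one, measureReal_restrict_apply (hE k),
    Set.inter_comm]

end Assembly

/-- For a `σ`-invariant Gibbs measure `ν` with zero pressure,
`∫ φ dν < 0` and, with `h := −∫ φ dν` (the entropy of `ν`), for every
`x ∈ Σ_A^* ∪ {∅}`,
`(1/r) ∫_{[x]} card{k ∈ ℕ₀ : 0 ≤ −S_kφ(ω) ≤ r} dν(ω) → ν([x])/h` as `r → ∞`. -/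
theorem renewal_counting_tendsto
    (hl : 2 ≤ l) (A : Matrix (Fin l) (Fin l) ℕ) (hA : Primitive A)
    (φ : SigmaA l A → ℝ) (hφ : HolderCont φ)
    (ν : Measure (SigmaA l A)) [IsProbabilityMeasure ν] (hGibbs : IsGibbs φ 0 ν)
    (hinv : ∀ B : Set (SigmaA l A), MeasurableSet B → ν (shift ⁻¹' B) = ν B) :
    (∫ ω, φ ω ∂ν) < 0 ∧
      ∀ x : List (Fin l), x = [] ∨ Admissible A x →
        Tendsto
          (fun r : ℝ =>
            (∫ ω in cylinder A x,
              ((Set.ncard {k : ℕ | 0 ≤ -birkhoff φ k ω ∧ -birkhoff φ k ω ≤ r} : ℕ) : ℝ) ∂ν) / r)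
          atTop (nhds ((ν (cylinder A x)).toReal / (-(∫ ω, φ ω ∂ν)))) := by
  have hφc := hφ.continuous
  have hmp : MeasurePreserving shift ν ν :=
    ⟨continuous_shift.measurable, Measure.ext fun B hB => by
      rw [Measure.map_apply continuous_shift.measurable hB, hinv B hB]⟩
  have hneg : (∫ ω, φ ω ∂ν) < 0 := integral_neg_of_isGibbs hl hA hφ hGibbs hmp
  refine ⟨hneg, fun x _ => ?_⟩
  obtain ⟨D, -, hD⟩ := hφ.exists_bound
  obtain ⟨δ, C, hδ, hC, hgrow⟩ := hGibbs.exists_linear_growth hφ hA hl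
  have hh : 0 < -(∫ ω, φ ω ∂ν) := neg_pos.2 hneg
  set h := -(∫ ω, φ ω ∂ν) with hh_def
  have hmeas := tendstoInMeasure_iff_norm.1 (tendstoInMeasure_birkhoffAverage
    (hGibbs.ergodic hφ hA hmp)
    (MemLp.of_bound hφc.aestronglyMeasurable D (Eventually.of_forall hD)))
  let E (r : ℝ) (k : ℕ) : Set (SigmaA l A) := {ω | 0 ≤ -birkhoff φ k ω ∧ -birkhoff φ k ω ≤ r}
  let bad (ε : ℝ) (k : ℕ) : Set (SigmaA l A) :=
    {ω | ε ≤ ‖birkhoffAverage ℝ shift φ k ω - ∫ ω, φ ω ∂ν‖}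
  have hbad {ε : ℝ} {k : ℕ} (hk : 0 < k) {ω : SigmaA l A} :
      ω ∈ bad ε k ↔ k * ε ≤ |birkhoff φ k ω + k * h| := by
    have hk' : (0 : ℝ) < k := by exact_mod_cast hk
    have : birkhoffAverage ℝ shift φ k ω - ∫ ω, φ ω ∂ν =
        (k : ℝ)⁻¹ * (birkhoff φ k ω + k * h) := by
      rw [mul_add, inv_mul_cancel_left₀ hk'.ne', hh_def, ← sub_eq_add_neg]
      rfl
    simp only [bad, Set.mem_ofPred_eq]
    rw [this, norm_mul, norm_inv, Real.norm_natCast, Real.norm_eq_abs, ← div_eq_inv_mul,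
      le_div_iff₀ hk', mul_comm]
  have hlim := tendsto_sum_div_of_threshold (h := h) (p := ν.real (cylinder A x))
    (b := δ⁻¹ + h⁻¹) (d := C / δ) (K := ⌈C / δ⌉₊ + 1)
    (a := fun r k => ν.real (cylinder A x ∩ E r k)) (q := fun ε k => ν.real (bad ε k))
    hh measureReal_nonneg (by simpa using hδ.le) (by positivity)
    (fun ε hε => by
      have h0 := (ENNReal.tendsto_toReal ENNReal.zero_ne_top).comp (hmeas ε hε)
      rwa [ENNReal.toReal_zero] at h0)
    (fun ε hε r hr k hk hkr => by
      have hsub : cylinder A x ⊆ (cylinder A x ∩ E r k) ∪ bad ε k := fun ω hω => by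
        by_cases hωb : ω ∈ bad ε k
        · exact Or.inr hωb
        · refine Or.inl ⟨hω, ?_, ?_⟩
          · have : C / δ ≤ k := (Nat.le_ceil _).trans (by exact_mod_cast (by omega))
            rw [div_le_iff₀ hδ] at this
            linarith [hgrow k ω]
          · rw [hbad (by omega), not_le, abs_lt] at hωb
            linarith [hωb.1]
      have := (measureReal_mono (μ := ν) hsub).trans (measureReal_union_le _ _)
      linarith)
    (fun _ _ => measureReal_nonneg) (fun _ _ => measureReal_mono Set.inter_subset_left)
    (fun ε hε hεh r hr k hk => by
      refine measureReal_mono fun ω hω => ?_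
      have hk0 : 0 < k := Nat.pos_of_ne_zero fun h0 => by
        simp only [h0, CharP.cast_eq_zero, zero_mul] at hk
        linarith
      rw [hbad hk0]
      refine le_trans ?_ (le_abs_self _)
      linarith [hω.2.2])
    (fun _ _ => measureReal_nonneg)
  refine hlim.congr' ?_
  filter_upwards [eventually_gt_atTop 0] with r hr
  congr 1
  exact (setIntegral_ncard_eq_sum hφc fun k ω hω => by
    have := (hgrow k ω).trans hω
    refine Nat.lt_succ_of_le (Nat.le_floor ?_)
    have hk : (k : ℝ) ≤ δ⁻¹ * r + C / δ := by
      rw [div_eq_inv_mul, ← mul_add, le_inv_mul_iff₀ hδ]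
      linarith
    have : 0 ≤ h⁻¹ * r := by positivity
    linarith).symm

end SFT
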